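/- arXiv:1603.00780 — 3 statements merged into one kernel-verified Lean document; each statement's English description precedes it below -/
import Mathlib

section
/- Let A be a structurable division algebra over a field k with char(k) ≠ 2 and char(k) ≠ 3. Then every pair (x,s) ∈ A × S with (x,s) ≠ (0,0) is one-invertible: there exist u ∈ A and t ∈ S such that {x,u,z} = z + s·(t·z) for all z ∈ A (i.e. V_{x,u} = id + L_s L_t), s·u = −(1/3)·U_x(t·x), and ψ(x, s·(t·x)) = 0. -/
/-- The triple product `{x,y,z} := (x·ȳ)·z + (z·ȳ)·x − (z·x̄)·y` of a (not necessarily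
associative or commutative) unital algebra `A` equipped with an involution `bar`. -/
def strTrip {A : Type*} [NonAssocRing A] (bar : A → A) (x y z : A) : A :=
  x * bar y * z + z * bar y * x - z * bar x * y

/-- `ψ(x,y) := x·ȳ − y·x̄`. -/
def strPsi {A : Type*} [NonAssocRing A] (bar : A → A) (x y : A) : A :=
  x * bar y - y * bar x

/-- `q_x(s) := (1/6)·ψ(x, U_x(s·x))`, where `U_x y := {x,y,x}`. -/
noncomputable def strQ (k : Type*) [Field k] {A : Type*} [NonAssocRing A] [Module k A]
    (bar : A → A) (x s : A) : A :=
  (6 : k)⁻¹ • strPsi bar x (strTrip bar x (s * x) x)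

/-- `(A, bar)` is a structurable algebra over `k`: `bar` is a `k`-linear involutive
anti-automorphism of `A`, and the operator identity
`[V_{x,y}, V_{z,w}] = V_{{x,y,z},w} − V_{z,{y,x,w}}` holds, where
`V_{x,y} z := strTrip bar x y z`. -/
def IsStructurable (k : Type*) [Field k] (A : Type*) [NonAssocRing A] [Module k A]
    (bar : A → A) : Prop :=
  (∀ x y : A, bar (x + y) = bar x + bar y) ∧
  (∀ (c : k) (x : A), bar (c • x) = c • bar x) ∧
  (∀ x y : A, bar (x * y) = bar y * bar x) ∧
  (∀ x : A, bar (bar x) = x) ∧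
  (∀ x y z w a : A,
    strTrip bar x y (strTrip bar z w a) - strTrip bar z w (strTrip bar x y a)
      = strTrip bar (strTrip bar x y z) w a - strTrip bar z (strTrip bar y x w) a)

/-- `A` is a (conjugate) division algebra: every nonzero `u ∈ A` has a conjugate
inverse `v`, i.e. `V_{u,v} = id`. -/
def IsConjDivision {A : Type*} [NonAssocRing A] (bar : A → A) : Prop :=
  ∀ u : A, u ≠ 0 → ∃ v : A, ∀ z : A, strTrip bar u v z = z

/-!
For `x ≠ 0` and `s ≠ 0`, let `r` be the conjugate inverse of `s`, put `q = q_x(r)`, let `t` be the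
conjugate inverse of `s + q` and let `u = (1/3) r U_x(tx)`. Two facts make this work. First, `s + q`
is nonzero, since otherwise both `U_x(rx) + 3x` and `U_x(rx) - 3x` would vanish. Second,
`ψ(tx, rx) = 0`, which forces `r U_x(tx) = t U_x(rx)`; comparing the two ways of commuting
`V_{x,rx}` with `V_{x,tx}` then gives `V_{x,u} = id + L_s L_t`.

All computations rest on the two identities `s V_{x,y} + V_{y,x} L_s = L_{ψ(sx,y)}` and
`L_s L_{ψ(x,y)} L_s = -L_{ψ(sx,sy)}` for skew `s`. They follow from skew-alternativity, which is
the defining operator identity evaluated at the unit. The second one also produces the inverse of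
`L_s` explicitly, so no dimension count is involved.
-/

section SkewAdjoint

variable {A B : Type*} [AddCommGroup A] [StarAddMonoid A] [AddCommGroup B]

theorem eq_of_eqOn_selfAdjoint_of_eqOn_skewAdjoint (h2 : IsSMulRegular B 2) {f g : A →+ B}
    (hself : ∀ x, star x = x → f x = g x) (hskew : ∀ x, star x = -x → f x = g x) : f = g := by
  ext x
  have hx_self := hself (x + star x) (by rw [star_add, star_star, add_comm])
  have hx_skew := hskew (x - star x) (by rw [star_sub, star_star, neg_sub])
  have hx : 2 • x = (x + star x) + (x - star x) := by module
  apply h2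
  change 2 • f x = 2 • g x
  rw [← map_nsmul, ← map_nsmul, hx, map_add f, map_add g, hx_self, hx_skew]

end SkewAdjoint

theorem isSMulRegular_nat_of_cast_ne_zero (k : Type*) {M : Type*} [Field k] [AddCommGroup M]
    [Module k M] {n : ℕ} (hn : (n : k) ≠ 0) : IsSMulRegular M n := fun a b h =>
  smul_right_injective M hn (by simpa only [Nat.cast_smul_eq_nsmul] using h)

/-- A structurable ring without 2- and 3-torsion: the ring-theoretic content of a structurable
algebra over a field of characteristic different from 2 and 3. -/
class StructurableRing (A : Type*) [NonAssocRing A] [StarRing A] : Prop where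
  two_regular : IsSMulRegular A 2
  three_regular : IsSMulRegular A 3
  strTrip_commutator (x y z w a : A) :
    strTrip star x y (strTrip star z w a) - strTrip star z w (strTrip star x y a) =
      strTrip star (strTrip star x y z) w a - strTrip star z (strTrip star y x w) a

namespace StructurableRing

variable {A : Type*} [NonAssocRing A] [StarRing A]

theorem two_nsmul_inj [StructurableRing A] {a b : A} (h : 2 • a = 2 • b) : a = b :=
  two_regular h

theorem three_nsmul_inj [StructurableRing A] {a b : A} (h : 3 • a = 3 • b) : a = b :=
  three_regular h

theorem six_regular [StructurableRing A] : IsSMulRegular A 6 :=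
  (two_regular (A := A)).mul three_regular

theorem six_nsmul_inj [StructurableRing A] {a b : A} (h : 6 • a = 6 • b) : a = b :=
  six_regular h

section SkewAlternativity

theorem star_associator (x y z : A) :
    star (associator x y z) = -associator (star z) (star y) (star x) := by
  simp only [associator, star_sub, star_mul, neg_sub]

variable [StructurableRing A]

theorem associator_skew_selfAdjoint {s x : A} (hs : star s = -s) (hx : star x = x) (y : A) :
    associator s x y - associator x s y = 2 • associator x y s ∧
      associator y s x = -associator y x s := by
  have h₁ := strTrip_commutator s 1 1 x y
  have h₂ := strTrip_commutator s 1 x 1 y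
  simp only [strTrip, star_add, star_sub, star_mul, star_neg, star_one, hs, hx, mul_add, add_mul,
    mul_sub, sub_mul, mul_neg, neg_mul, mul_one, one_mul, neg_neg] at h₁ h₂
  constructor
  · apply two_nsmul_inj
    simp only [associator]
    linear_combination (norm := module) -h₁ - h₂
  · apply six_nsmul_inj
    simp only [associator]
    linear_combination (norm := module) h₂ - h₁

theorem associator_skew_skew {s r : A} (hs : star s = -s) (hr : star r = -r) (y : A) :
    2 • associator r y s = associator s r y - associator r s y := by
  have h₁ := strTrip_commutator s 1 r y 1
  have h₂ := strTrip_commutator s 1 1 y r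
  apply two_nsmul_inj
  simp only [strTrip, associator, star_add, star_sub, star_mul, star_neg, star_one, hs, hr,
    mul_add, add_mul, mul_sub, sub_mul, mul_neg, neg_mul, mul_one, one_mul, neg_neg] at h₁ h₂ ⊢
  linear_combination (norm := module) h₁ - h₂

theorem associator_reverse_of_skew {s r : A} (hs : star s = -s) (hr : star r = -r) (y : A) :
    associator r y s = -associator s y r := by
  have h₁ := associator_skew_skew hs hr y
  have h₂ := associator_skew_skew hr hs y
  apply two_nsmul_inj
  linear_combination (norm := module) h₁ + h₂

theorem associator_swap_of_skew {s r y : A} (hs : star s = -s) (hr : star r = -r)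
    (hy : star y = -y) : associator r s y = -associator s r y := by
  have h₁ := associator_skew_skew hs hr y
  have h₂ := associator_skew_skew hy hs r
  have h₃ := associator_reverse_of_skew hs hr y
  have h₄ := associator_reverse_of_skew hy hr s
  apply three_nsmul_inj
  linear_combination (norm := module) h₁ + (2 : ℤ) • h₂ - (2 : ℤ) • h₃ + (2 : ℤ) • h₄

theorem associator_swap_left {s : A} (hs : star s = -s) (x y : A) :
    associator x s y = -associator s x y := by
  suffices h : (AddMonoidHom.associator.flip s).flip y = -(AddMonoidHom.associator s).flip y from
    DFunLike.congr_fun h x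
  refine eq_of_eqOn_selfAdjoint_of_eqOn_skewAdjoint two_regular (fun h hh => ?_) (fun r hr => ?_)
  · have hrev := congrArg star (associator_skew_selfAdjoint hs hh (star y)).2
    simp only [star_associator, star_neg, star_star, hs, hh] at hrev
    change associator h s y = -associator s h y
    simp only [associator, neg_mul, mul_neg] at hrev ⊢
    linear_combination (norm := module) hrev
  · suffices h : AddMonoidHom.associator r s = -AddMonoidHom.associator s r from
      DFunLike.congr_fun h y
    refine eq_of_eqOn_selfAdjoint_of_eqOn_skewAdjoint two_regular (fun h hh => ?_) (fun t ht => ?_)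
    · have h₁ := associator_skew_skew hs hr h
      have h₂ := (associator_skew_selfAdjoint hs hh r).2
      change associator r s h = -associator s r h
      linear_combination (norm := module) 2 • h₂ - h₁
    · exact associator_swap_of_skew hs hr ht

theorem associator_swap_right {s : A} (hs : star s = -s) (x y : A) :
    associator x s y = -associator x y s := by
  have h := congrArg star (associator_swap_left hs (star y) (star x))
  simp only [star_associator, star_neg, star_star, hs] at h
  simp only [associator, neg_mul, mul_neg] at h ⊢
  linear_combination (norm := module) h

end SkewAlternativity

section TripleProduct

/-- The triple product `V_{x,y} z = {x, y, z}` as a map additive in each argument. -/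
def tripleHom : A →+ A →+ A →+ A :=
  AddMonoidHom.mk' (fun x => AddMonoidHom.mk' (fun y => AddMonoidHom.mk' (strTrip star x y)
    fun a b => by simp only [strTrip, mul_add, add_mul]; abel)
    fun a b => by
      ext z
      simp only [strTrip, star_add, mul_add, add_mul, AddMonoidHom.mk'_apply,
        AddMonoidHom.add_apply]
      abel)
    fun a b => by
      ext y z
      simp only [strTrip, star_add, mul_add, add_mul, AddMonoidHom.mk'_apply,
        AddMonoidHom.add_apply]
      abel

/-- The skew-valued form `ψ(x, y)` as a map additive in each argument. -/
def psiHom : A →+ A →+ A :=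
  AddMonoidHom.mk' (fun x => AddMonoidHom.mk' (strPsi star x)
    fun a b => by simp only [strPsi, star_add, mul_add, add_mul]; abel)
    fun a b => by
      ext y
      simp only [strPsi, star_add, mul_add, add_mul, AddMonoidHom.mk'_apply,
        AddMonoidHom.add_apply]
      abel

end TripleProduct

local notation "V" => tripleHom
local notation "ψ" => psiHom

section KantorIdentities

theorem triple_apply (x y z : A) : V x y z = x * star y * z + z * star y * x - z * star x * y := rfl

theorem psi_apply (x y : A) : ψ x y = x * star y - y * star x := rfl

theorem star_psi (x y : A) : star (ψ x y) = -ψ x y := by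
  simp only [psi_apply, star_sub, star_mul, star_star, neg_sub]

theorem psi_swap (x y : A) : ψ x y = -ψ y x := by
  simp only [psi_apply, neg_sub]

theorem psi_self (x : A) : ψ x x = 0 := sub_self _

theorem psi_one_right {s : A} (hs : star s = -s) : ψ s 1 = 2 • s := by
  rw [psi_apply, star_one, mul_one, one_mul, hs, sub_neg_eq_add, two_nsmul]

theorem triple_sub_reverse (x y z : A) : V x y z - V z y x = ψ x z * y := by
  simp only [triple_apply, psi_apply, sub_mul]
  abel

variable [StructurableRing A]

theorem triple_commutator (x y z w a : A) :
    V x y (V z w a) - V z w (V x y a) = V (V x y z) w a - V z (V y x w) a :=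
  strTrip_commutator x y z w a

theorem mul_triple_one_add_triple {s : A} (hs : star s = -s) (x y : A) :
    s * V x y 1 + V y x s = ψ (s * x) y := by
  have hx : star (x - star x) = -(x - star x) := by rw [star_sub, star_star, neg_sub]
  have hy : star (y - star y) = -(y - star y) := by rw [star_sub, star_star, neg_sub]
  have h₁ := associator_swap_right hx s y
  have h₂ := associator_swap_right hy s x
  have h₃ := associator_swap_left hs y (star x)
  have h₄ := associator_swap_right hs y (star x)
  simp only [triple_apply, psi_apply, associator, star_mul, hs, mul_add, mul_sub, sub_mul, mul_neg,
    mul_one, one_mul] at h₁ h₂ h₃ h₄ ⊢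
  linear_combination (norm := module) h₄ - h₃ - h₁ + h₂

theorem mul_triple_add_triple_mul {s : A} (hs : star s = -s) (x y z : A) :
    s * V x y z + V y x (s * z) = ψ (s * x) y * z := by
  have hψ (w : A) : 2 • (s * w) = V s w 1 - V 1 w s := by
    rw [triple_sub_reverse, psi_one_right hs, smul_mul_assoc]
  have hmul (w : A) : 2 • (s * V x y w + V y x (s * w)) =
      (ψ (V y x s) 1 + ψ s (V y x 1)) * w := by
    have h₁ := triple_commutator y x s w 1
    have h₂ := triple_commutator y x 1 w s
    have h₃ := triple_sub_reverse (V y x s) w 1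
    have h₄ := triple_sub_reverse s w (V y x 1)
    have h₅ := congrArg (V y x) (hψ w)
    rw [map_nsmul, map_sub] at h₅
    linear_combination (norm := (simp only [add_mul]; module)) hψ (V x y w) + h₅ + h₁ - h₂ + h₃ + h₄
  have hone := hmul 1
  rw [mul_one, mul_one, mul_triple_one_add_triple hs] at hone
  apply two_nsmul_inj
  rw [hmul, ← hone, smul_mul_assoc]

theorem triple_mul_left {s : A} (hs : star s = -s) (x y z : A) :
    V (s * z) x y = ψ (s * x) y * z - s * V x y z - ψ y (s * z) * x := by
  linear_combination (norm := module)
    mul_triple_add_triple_mul hs x y z - triple_sub_reverse y x (s * z)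

theorem triple_mul_left_sub_swap {s : A} (hs : star s = -s) (x y z : A) :
    V (s * x) y z - V (s * y) x z = s * (ψ x y * z) := by
  rw [triple_mul_left hs, triple_mul_left hs, ← triple_sub_reverse x z y, psi_swap (s * y),
    psi_swap (s * x), mul_sub]
  noncomm_ring

theorem triple_psi_mul_mid_sub_swap (a b x y z : A) :
    V x (ψ a b * y) z - V y (ψ a b * x) z = -(ψ x y * (ψ a b * z)) := by
  have h₁ := triple_commutator y a x b z
  have h₂ := triple_commutator x a y b z
  have h₃ := triple_commutator y b x a z
  have h₄ := triple_commutator x b y a z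
  have h₅ := triple_mul_left_sub_swap (star_psi x y) a b z
  rw [← triple_sub_reverse x a y, ← triple_sub_reverse x b y] at h₅
  rw [← triple_sub_reverse a y b, ← triple_sub_reverse a x b]
  simp only [map_sub, AddMonoidHom.sub_apply] at h₅ ⊢
  linear_combination (norm := module) h₁ - h₃ - h₂ + h₄ - h₅

theorem triple_mul_mid_sub_swap {s : A} (hs : star s = -s) (x y z : A) :
    V x (s * y) z - V y (s * x) z = -(ψ x y * (s * z)) := by
  have h := triple_psi_mul_mid_sub_swap s 1 x y z
  simp only [psi_one_right hs, smul_mul_assoc, mul_smul_comm, map_nsmul,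
    AddMonoidHom.nsmul_apply] at h
  apply two_nsmul_inj
  linear_combination (norm := module) h

theorem mul_psi_mul {s : A} (hs : star s = -s) (x y z : A) :
    s * (ψ x y * (s * z)) = -(ψ (s * x) (s * y) * z) := by
  have h₁ := triple_mul_left_sub_swap hs x y (s * z)
  have h₂ := mul_triple_add_triple_mul hs y (s * x) z
  have h₃ := mul_triple_add_triple_mul hs x (s * y) z
  have h₄ := congrArg (s * ·) (triple_mul_mid_sub_swap hs x y z)
  rw [psi_swap (s * y) (s * x)] at h₂
  simp only [mul_sub, mul_neg, neg_mul] at h₂ h₄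
  apply two_nsmul_inj
  linear_combination (norm := module) h₂ - h₁ - h₃ + h₄

end KantorIdentities

section ConjugateInverse

/-- `v` is the conjugate inverse of `u`: `V_{u,v} = id`. -/
def IsConjInverse (u v : A) : Prop :=
  ∀ z, V u v z = z

/-- The skew elements `s` and `r` are conjugate inverses of each other, i.e. `L_s L_r = -id` and
`L_r L_s = -id`. -/
structure IsSkewInverse (s r : A) : Prop where
  star_left : star s = -s
  star_right : star r = -r
  mul_mul_left (z : A) : s * (r * z) = -z
  mul_mul_right (z : A) : r * (s * z) = -z

theorem IsSkewInverse.symm {s r : A} (h : IsSkewInverse s r) : IsSkewInverse r s :=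
  ⟨h.star_right, h.star_left, h.mul_mul_right, h.mul_mul_left⟩

theorem IsSkewInverse.mul_eq_zero {s r z : A} (h : IsSkewInverse s r) (hz : s * z = 0) : z = 0 := by
  rw [← neg_eq_zero, ← h.mul_mul_right, hz, mul_zero]

theorem exists_nsmul_eq (hdiv : IsConjDivision (star : A → A)) {n : ℕ}
    (hn : IsSMulRegular A n) (a : A) : ∃ b, n • b = a := by
  by_cases ha : n • a = 0
  · exact ⟨0, by rw [smul_zero, hn.right_eq_zero_of_smul ha]⟩
  · obtain ⟨v, hv⟩ := hdiv _ ha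
    refine ⟨V a v a, ?_⟩
    rw [← AddMonoidHom.nsmul_apply, ← AddMonoidHom.nsmul_apply, ← map_nsmul]
    exact hv a

variable [StructurableRing A]

theorem eq_zero_of_triple_mid_eq_zero {b : A} (hb : ∀ z a, V z b a = 0) : b = 0 := by
  have h := hb 1 1
  simp only [triple_apply, star_one, mul_one, one_mul] at h
  have hstar := congrArg star h
  simp only [star_sub, star_add, star_star, star_zero] at hstar
  apply three_nsmul_inj
  linear_combination (norm := module) (2 : ℤ) • hstar + h

theorem IsConjInverse.symm {u v : A} (h : IsConjInverse u v) : IsConjInverse v u := by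
  intro z
  refine sub_eq_zero.1 (eq_zero_of_triple_mid_eq_zero fun a b => ?_)
  have hc := triple_commutator u v a z b
  rw [h, h, h] at hc
  simp only [map_sub, AddMonoidHom.sub_apply]
  linear_combination (norm := module) hc

theorem IsConjInverse.psi_mul_left {s u v : A} (h : IsConjInverse u v) (hs : star s = -s) :
    ψ (s * u) v = 2 • s := by
  have hs' := mul_triple_add_triple_mul hs u v 1
  rw [h, h.symm, mul_one, mul_one] at hs'
  rw [← hs', two_nsmul]

theorem IsConjInverse.triple_mul_left {r x y : A} (h : IsConjInverse x y) (hr : star r = -r) :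
    V (r * x) x y = 3 • (r * x) := by
  have h₁ := triple_sub_reverse (r * x) x y
  have h₂ := h.symm (r * x)
  rw [h.psi_mul_left hr, smul_mul_assoc] at h₁
  linear_combination (norm := module) h₁ + h₂

theorem skew_mul_eq_zero (hdiv : IsConjDivision (star : A → A)) {s z : A}
    (hs : star s = -s) (hs0 : s ≠ 0) (hz : s * z = 0) : z = 0 := by
  by_contra hne
  obtain ⟨v, hv⟩ := hdiv z hne
  have h := IsConjInverse.psi_mul_left hv hs
  rw [hz, map_zero, AddMonoidHom.zero_apply] at h
  exact hs0 (two_regular.right_eq_zero_of_smul h.symm)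

-- With `r` the conjugate inverse of `s`, `2 s = ψ (s r) (s 1)`, so `mul_psi_mul` exhibits
-- `ψ r 1 / 2` as the inverse.
theorem exists_isSkewInverse (hdiv : IsConjDivision (star : A → A)) {s : A}
    (hs : star s = -s) (hs0 : s ≠ 0) : ∃ r, IsSkewInverse s r := by
  obtain ⟨r, hr : IsConjInverse s r⟩ := hdiv s hs0
  obtain ⟨p, hp⟩ := exists_nsmul_eq hdiv two_regular (ψ r 1)
  have hp_skew : star p = -p := by
    apply two_nsmul_inj
    rw [smul_neg, ← star_nsmul, hp, star_psi]
  have hsps (z : A) : s * (p * (s * z)) = -(s * z) := by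
    have h := mul_psi_mul hs r 1 z
    rw [mul_one, hr.symm.psi_mul_left hs, ← hp] at h
    apply two_nsmul_inj
    simpa only [smul_mul_assoc, mul_smul_comm, smul_neg] using h
  have hps (z : A) : p * (s * z) = -z := by
    rw [← add_eq_zero_iff_eq_neg]
    apply skew_mul_eq_zero hdiv hs hs0
    rw [mul_add, hsps, neg_add_cancel]
  have hp0 : p ≠ 0 := by
    rintro rfl
    exact hs0 (by simpa only [zero_mul, zero_eq_neg] using hps s)
  refine ⟨p, hs, hp_skew, fun z => ?_, hps⟩
  rw [← add_eq_zero_iff_eq_neg]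
  apply skew_mul_eq_zero hdiv hp_skew hp0
  rw [mul_add, hps, neg_add_cancel]

theorem eq_zero_of_triple_mul_self_eq_zero (hdiv : IsConjDivision (star : A → A))
    {r y : A} (hr : star r = -r) (hr0 : r ≠ 0) (hy : ∀ z, V y (r * y) z = 0) : y = 0 := by
  by_contra hne
  obtain ⟨v, hv : IsConjInverse y v⟩ := hdiv y hne
  have h : V (r * y) y v = 0 := by
    refine eq_zero_of_triple_mid_eq_zero fun a b => ?_
    have hc := triple_commutator y (r * y) a v b
    simp only [hy, map_zero, AddMonoidHom.zero_apply] at hc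
    linear_combination (norm := module) hc
  rw [hv.triple_mul_left hr] at h
  exact hne (skew_mul_eq_zero hdiv hr hr0 (three_regular.right_eq_zero_of_smul h))

theorem triple_mul_right_of_psi_eq_zero {s x y : A} (hs : star s = -s) (h : ψ (s * x) y = 0)
    (z : A) : V y x (s * z) = -(s * V x y z) := by
  have h₁ := mul_triple_add_triple_mul hs x y z
  rw [h, zero_mul] at h₁
  linear_combination (norm := module) h₁

theorem IsSkewInverse.psi_mul_eq_zero {s r x y : A} (h : IsSkewInverse s r)
    (hxy : ψ (s * x) y = 0) : ψ (r * y) x = 0 := by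
  have hsz (z : A) : s * (ψ (r * y) x * (s * z)) = 0 := by
    rw [mul_psi_mul h.star_left, h.mul_mul_left, map_neg, AddMonoidHom.neg_apply, psi_swap, hxy]
    simp only [neg_zero, zero_mul]
  have h_one := h.mul_eq_zero (hsz (r * 1))
  rwa [h.mul_mul_left, mul_neg, mul_one, neg_eq_zero] at h_one

end ConjugateInverse

section QuadraticForm

variable [StructurableRing A] {x r q : A}

theorem triple_mul_self_mul (hr : star r = -r) (x z : A) :
    V (r * x) x (r * z) = -(r * V x (r * x) z) :=
  triple_mul_right_of_psi_eq_zero hr (psi_self (r * x)) z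

theorem triple_triple_mul_self (hr : star r = -r) (x z : A) :
    V (V x (r * x) x) (r * x) z = -V x (r * V x (r * x) x) z := by
  have h := triple_commutator x (r * x) x (r * x) z
  rw [triple_mul_self_mul hr, map_neg, AddMonoidHom.neg_apply] at h
  linear_combination (norm := module) -h

theorem triple_mul_triple (hr : star r = -r) (hq : ψ x (V x (r * x) x) = 6 • q) (z : A) :
    V x (r * V x (r * x) x) z = -(3 • (q * (r * z))) := by
  have h := triple_mul_mid_sub_swap hr x (V x (r * x) x) z
  rw [triple_triple_mul_self hr, hq, smul_mul_assoc] at h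
  apply two_nsmul_inj
  linear_combination (norm := module) h

theorem triple_mul_self_triple (hr : star r = -r) (hq : ψ x (V x (r * x) x) = 6 • q) :
    V x (r * x) (V x (r * x) x) = 9 • (q * (r * x)) := by
  have h := triple_sub_reverse x (r * x) (V x (r * x) x)
  rw [triple_triple_mul_self hr, triple_mul_triple hr hq, hq, smul_mul_assoc] at h
  linear_combination (norm := module) h

theorem triple_mul_triple_mul (hr : star r = -r) (hq : ψ x (V x (r * x) x) = 6 • q) (z : A) :
    V (r * V x (r * x) x) x (r * z) = -(3 • (r * (q * (r * z)))) := by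
  have h₁ := mul_triple_add_triple_mul hr x (r * V x (r * x) x) z
  have h₂ := mul_psi_mul hr x (V x (r * x) x) z
  rw [triple_mul_triple hr hq, mul_neg, mul_smul_comm] at h₁
  rw [hq, smul_mul_assoc, mul_smul_comm] at h₂
  linear_combination (norm := module) h₁ + h₂

theorem star_eq_neg_of_psi_eq_nsmul {a b : A} (hq : ψ a b = 6 • q) : star q = -q := by
  apply six_nsmul_inj
  rw [smul_neg, ← star_nsmul, ← hq, star_psi]

theorem psi_mul_mul_self_eq_zero {y : A} (hxy : IsConjInverse x y) (hr : star r = -r)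
    (hq : ψ x (V x (r * x) x) = 6 • q) : ψ (q * (r * x)) x = 0 := by
  have hq_skew := star_eq_neg_of_psi_eq_nsmul hq
  have hqy : 3 • (q * y) = -V x (r * x) x := by
    have h₁ := triple_commutator x (r * x) x y x
    have h₂ := triple_sub_reverse x y (V x (r * x) x)
    rw [hxy, hxy, hxy.triple_mul_left hr, map_nsmul, AddMonoidHom.nsmul_apply] at h₁
    rw [hxy, hq, smul_mul_assoc] at h₂
    apply two_nsmul_inj
    linear_combination (norm := module) h₁ - h₂
  have hψy : ψ (q * (r * x)) x * y = 0 := by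
    have h₁ := mul_triple_add_triple_mul hq_skew (r * x) x y
    have h₂ := congrArg (V x (r * x)) hqy
    rw [hxy.triple_mul_left hr, mul_smul_comm] at h₁
    rw [map_nsmul, map_neg, triple_mul_self_triple hr hq] at h₂
    apply three_nsmul_inj
    linear_combination (norm := module) h₂ - (3 : ℤ) • h₁
  have h := hxy.symm.psi_mul_left (star_psi (q * (r * x)) x)
  rw [hψy, map_zero, AddMonoidHom.zero_apply] at h
  exact two_regular.right_eq_zero_of_smul h.symm

-- If `q = -s`, then `V_{e,re} = 0` for `e = U_x(rx) ± 3x`, so both elements `e` vanish.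
theorem add_ne_zero_of_isSkewInverse (hdiv : IsConjDivision (star : A → A)) {s : A} (hx : x ≠ 0)
    (hsr : IsSkewInverse s r) (hq : ψ x (V x (r * x) x) = 6 • q) : s + q ≠ 0 := by
  intro hsq
  have hr := hsr.star_right
  obtain rfl : q = -s := (neg_eq_of_add_eq_zero_right hsq).symm
  have hr0 : r ≠ 0 := by
    rintro rfl
    exact hx (by simpa only [zero_mul, mul_zero, zero_eq_neg] using hsr.mul_mul_left x)
  have h₁ (z : A) : V x (r * V x (r * x) x) z = -(3 • z) := by
    rw [triple_mul_triple hr hq, neg_mul, hsr.mul_mul_left, neg_neg]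
  have h₂ (z : A) : V (V x (r * x) x) (r * x) z = 3 • z := by
    rw [triple_triple_mul_self hr, h₁, neg_neg]
  have h₃ : V x (r * x) (V x (r * x) x) = 9 • x := by
    rw [triple_mul_self_triple hr hq, neg_mul, hsr.mul_mul_left, neg_neg]
  have h₄ (z : A) : V (V x (r * x) x) (r * V x (r * x) x) z = -(9 • V x (r * x) z) := by
    have h := triple_commutator x (r * x) x (r * V x (r * x) x) z
    rw [triple_mul_self_mul hr, h₃, h₁, h₁] at h
    simp only [mul_smul_comm, map_neg, map_nsmul, AddMonoidHom.neg_apply,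
      AddMonoidHom.nsmul_apply] at h
    linear_combination (norm := module) -h
  have h_add : V x (r * x) x + 3 • x = 0 := by
    refine eq_zero_of_triple_mul_self_eq_zero hdiv hr hr0 fun z => ?_
    simp only [mul_add, mul_smul_comm, map_add, map_nsmul, AddMonoidHom.add_apply,
      AddMonoidHom.nsmul_apply, h₁, h₂, h₄]
    module
  have h_sub : V x (r * x) x - 3 • x = 0 := by
    refine eq_zero_of_triple_mul_self_eq_zero hdiv hr hr0 fun z => ?_
    simp only [mul_sub, mul_smul_comm, map_sub, map_nsmul, AddMonoidHom.sub_apply,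
      AddMonoidHom.nsmul_apply, h₁, h₂, h₄]
    module
  apply hx
  apply six_nsmul_inj
  linear_combination (norm := module) h_add - h_sub

end QuadraticForm

section OneInverse

/-- The pair `(x, s)` is one-invertible, with the factor `1/3` in the condition on `s u`
cleared so that no base field is needed. -/
def IsOneInvertible (x s : A) : Prop :=
  ∃ u t : A, star t = -t ∧ (∀ z, V x u z = z + s * (t * z)) ∧
    3 • (s * u) = -V x (t * x) x ∧ ψ x (s * (t * x)) = 0

theorem isOneInvertible_zero_right (hdiv : IsConjDivision (star : A → A)) {x : A} (hx : x ≠ 0) :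
    IsOneInvertible x 0 := by
  obtain ⟨y, hxy : IsConjInverse x y⟩ := hdiv x hx
  refine ⟨y, 0, by rw [star_zero, neg_zero], fun z => ?_, ?_, ?_⟩
  · rw [hxy, zero_mul, add_zero]
  · simp only [zero_mul, smul_zero, map_zero, AddMonoidHom.zero_apply, neg_zero]
  · rw [zero_mul, map_zero]

theorem IsSkewInverse.right_summand_mul_mul {s q t : A} (h : IsSkewInverse (s + q) t) (z : A) :
    q * (t * z) = -z - s * (t * z) := by
  rw [← h.mul_mul_left z, add_mul, add_sub_cancel_left]

theorem IsSkewInverse.mul_right_summand_mul {s q t : A} (h : IsSkewInverse (s + q) t) (z : A) :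
    t * (q * z) = -z - t * (s * z) := by
  rw [← h.mul_mul_right z, add_mul, mul_add, add_sub_cancel_left]

variable [StructurableRing A]

theorem two_nsmul_mul_mul_mul {s t : A} (hs : star s = -s) (ht : star t = -t) (z : A) :
    2 • (s * (t * (s * z))) = -(ψ (s * t) s * z) := by
  have h := mul_psi_mul hs t 1 z
  simpa only [psi_one_right ht, smul_mul_assoc, mul_smul_comm, mul_one] using h

theorem two_nsmul_mul_mul {s t : A} (hs : star s = -s) (ht : star t = -t) :
    2 • (s * (t * s)) = -ψ (s * t) s := by
  simpa only [mul_one] using two_nsmul_mul_mul_mul hs ht 1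

theorem mul_mul_mul_of_skew {s t : A} (hs : star s = -s) (ht : star t = -t) (z : A) :
    s * (t * (s * z)) = s * (t * s) * z := by
  apply two_nsmul_inj
  rw [two_nsmul_mul_mul_mul hs ht, ← smul_mul_assoc, two_nsmul_mul_mul hs ht, neg_mul]

theorem star_mul_mul_of_skew {s t : A} (hs : star s = -s) (ht : star t = -t) :
    star (s * (t * s)) = -(s * (t * s)) := by
  apply two_nsmul_inj
  rw [← star_nsmul, smul_neg, two_nsmul_mul_mul hs ht, star_neg, star_psi]

/-- The elements from which the one-inverse `(u, t)` of a pair `(x, s)` with `x ≠ 0` and `s ≠ 0` is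
built: the conjugate inverses `y` of `x` and `r` of `s`, the value `q = q_x(r)`, and the conjugate
inverse `t` of `s + q`. -/
structure OneInverseData (x y s r q t : A) : Prop where
  conj_inverse : IsConjInverse x y
  skew_inverse : IsSkewInverse s r
  psi_triple : ψ x (V x (r * x) x) = 6 • q
  add_skew_inverse : IsSkewInverse (s + q) t

namespace OneInverseData

variable {x y s r q t : A}

theorem psi_t_mul_r_mul (h : OneInverseData x y s r q t) : ψ (t * x) (r * x) = 0 := by
  refine h.add_skew_inverse.psi_mul_eq_zero ?_
  rw [add_mul, map_add, AddMonoidHom.add_apply, h.skew_inverse.mul_mul_left, map_neg,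
    AddMonoidHom.neg_apply, psi_self, neg_zero, zero_add]
  exact psi_mul_mul_self_eq_zero h.conj_inverse h.skew_inverse.star_right h.psi_triple

theorem psi_s_mul_t_mul (h : OneInverseData x y s r q t) : ψ (s * (t * x)) x = 0 :=
  h.skew_inverse.symm.psi_mul_eq_zero (by rw [psi_swap, h.psi_t_mul_r_mul, neg_zero])

theorem psi_q_mul_t_mul (h : OneInverseData x y s r q t) : ψ (q * (t * x)) x = 0 := by
  rw [h.add_skew_inverse.right_summand_mul_mul, map_sub, map_neg, AddMonoidHom.sub_apply,
    AddMonoidHom.neg_apply, psi_self, h.psi_s_mul_t_mul, neg_zero, sub_zero]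

theorem triple_t_mul_r_mul (h : OneInverseData x y s r q t) (z : A) :
    V (t * x) x (r * z) = -(r * V x (t * x) z) :=
  triple_mul_right_of_psi_eq_zero h.skew_inverse.star_right
    (by rw [psi_swap, h.psi_t_mul_r_mul, neg_zero]) z

theorem triple_r_mul_t_mul (h : OneInverseData x y s r q t) (z : A) :
    V (r * x) x (t * z) = -(t * V x (r * x) z) :=
  triple_mul_right_of_psi_eq_zero h.add_skew_inverse.star_right h.psi_t_mul_r_mul z

theorem triple_t_mul_q_mul_r_mul (h : OneInverseData x y s r q t) (z : A) :
    V x (t * x) (q * (r * z)) = q * (r * V x (t * x) z) := by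
  rw [triple_mul_right_of_psi_eq_zero (star_eq_neg_of_psi_eq_nsmul h.psi_triple)
    h.psi_q_mul_t_mul, h.triple_t_mul_r_mul, mul_neg, neg_neg]

theorem r_mul_triple_eq_t_mul_triple (h : OneInverseData x y s r q t) :
    r * V x (t * x) x = t * V x (r * x) x := by
  have hr := h.skew_inverse.star_right
  have htx : t * x = r * -(s * (t * x)) := by
    rw [mul_neg, h.skew_inverse.mul_mul_right, neg_neg]
  have h₁ : V (r * V x (r * x) x) x (t * x) = 3 • (r * x) - 3 • (t * x) := by
    conv_lhs => rw [htx]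
    rw [triple_mul_triple_mul hr h.psi_triple, ← htx, h.add_skew_inverse.right_summand_mul_mul,
      mul_sub, mul_neg, h.skew_inverse.mul_mul_right]
    module
  have h₂ : V x (t * x) x = V x (r * x) x + q * (r * V x (t * x) x) := by
    have hc := triple_commutator x (r * V x (r * x) x) x (t * x) x
    have hrev := triple_sub_reverse (q * (r * x)) (t * x) x
    rw [psi_mul_mul_self_eq_zero h.conj_inverse hr h.psi_triple] at hrev
    simp only [h₁, triple_mul_triple hr h.psi_triple, map_neg, map_sub, map_nsmul,
      AddMonoidHom.neg_apply, AddMonoidHom.sub_apply, AddMonoidHom.nsmul_apply,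
      h.triple_t_mul_q_mul_r_mul, zero_mul] at hc hrev
    apply three_nsmul_inj
    linear_combination (norm := module) (3 : ℤ) • hrev - hc
  have h₃ : (s + q) * (r * V x (t * x) x) = -V x (r * x) x := by
    rw [add_mul, h.skew_inverse.mul_mul_left]
    linear_combination (norm := module) -h₂
  have h₄ := congrArg (t * ·) h₃
  simpa only [h.add_skew_inverse.mul_mul_right, mul_neg, neg_inj] using h₄

theorem psi_triple_mul_r_mul (h : OneInverseData x y s r q t) (z : A) :
    ψ x (V x (t * x) x) * (r * z) = 6 • (q * (t * z)) := by
  have hr := h.skew_inverse.star_right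
  have hs := h.skew_inverse.star_left
  have ht := h.add_skew_inverse.star_right
  have hstr (w : A) : s * (t * s) * (r * w) = -(s * (t * w)) := by
    rw [← mul_mul_mul_of_skew hs ht, h.skew_inverse.mul_mul_left, mul_neg, mul_neg]
  have hstD : s * (t * V x (r * x) x) = -V x (t * x) x := by
    rw [← h.r_mul_triple_eq_t_mul_triple, h.skew_inverse.mul_mul_left]
  have hstqr : s * (t * (q * (r * z))) = z + s * (t * z) := by
    rw [h.add_skew_inverse.mul_right_summand_mul, h.skew_inverse.mul_mul_left, mul_sub, mul_neg,
      mul_neg, mul_neg, h.skew_inverse.mul_mul_left]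
    module
  have hK := mul_triple_add_triple_mul (star_mul_mul_of_skew hs ht) (r * V x (r * x) x) x (r * z)
  rw [hstr, hstr, hstD, neg_neg, psi_swap, triple_mul_triple_mul hr h.psi_triple, mul_neg,
    mul_smul_comm, hstr, hstqr, map_neg, triple_mul_triple hr h.psi_triple,
    h.skew_inverse.mul_mul_right, mul_neg, neg_mul] at hK
  have hq := h.add_skew_inverse.right_summand_mul_mul z
  rw [hq] at hK ⊢
  linear_combination (norm := module) hK

theorem triple_r_mul_triple (h : OneInverseData x y s r q t) (z : A) :
    V x (r * V x (t * x) x) z = 3 • (z + s * (t * z)) := by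
  have h₁ := triple_mul_mid_sub_swap h.add_skew_inverse.star_right x (V x (r * x) x) z
  have h₂ := triple_commutator x (r * x) x (t * x) z
  have h₃ := triple_commutator x (t * x) x (r * x) z
  have h₄ := triple_mul_mid_sub_swap h.skew_inverse.star_right x (V x (t * x) x) z
  rw [← h.r_mul_triple_eq_t_mul_triple, h.psi_triple, smul_mul_assoc] at h₁
  rw [h.triple_r_mul_t_mul, ← h.r_mul_triple_eq_t_mul_triple, map_neg, AddMonoidHom.neg_apply] at h₂
  rw [h.triple_t_mul_r_mul, map_neg, AddMonoidHom.neg_apply] at h₃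
  rw [h.psi_triple_mul_r_mul] at h₄
  have hq := h.add_skew_inverse.right_summand_mul_mul z
  rw [hq] at h₁ h₄
  apply two_nsmul_inj
  apply two_nsmul_inj
  linear_combination (norm := module) h₁ + h₄ - h₂ - h₃

end OneInverseData

theorem isOneInvertible_zero_left (hdiv : IsConjDivision (star : A → A)) {s : A}
    (hs : star s = -s) (hs0 : s ≠ 0) : IsOneInvertible 0 s := by
  obtain ⟨t, hst⟩ := exists_isSkewInverse hdiv hs hs0
  refine ⟨0, t, hst.star_right, fun z => ?_, ?_, ?_⟩
  · simp only [hst.mul_mul_left, map_zero, AddMonoidHom.zero_apply, add_neg_cancel]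
  · simp only [mul_zero, smul_zero, map_zero, neg_zero]
  · rw [map_zero, AddMonoidHom.zero_apply]

theorem OneInverseData.isOneInvertible {x y s r q t : A} (hdiv : IsConjDivision (star : A → A))
    (h : OneInverseData x y s r q t) : IsOneInvertible x s := by
  obtain ⟨u, hu⟩ := exists_nsmul_eq hdiv three_regular (r * V x (t * x) x)
  refine ⟨u, t, h.add_skew_inverse.star_right, fun z => ?_, ?_, ?_⟩
  · apply three_nsmul_inj
    rw [← h.triple_r_mul_triple, ← hu, map_nsmul, AddMonoidHom.nsmul_apply]
  · rw [← mul_smul_comm, hu, h.skew_inverse.mul_mul_left]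
  · rw [psi_swap, h.psi_s_mul_t_mul, neg_zero]

theorem exists_oneInverseData (hdiv : IsConjDivision (star : A → A)) {x s : A} (hx : x ≠ 0)
    (hs : star s = -s) (hs0 : s ≠ 0) : ∃ y r q t, OneInverseData x y s r q t := by
  obtain ⟨y, hxy⟩ := hdiv x hx
  obtain ⟨r, hsr⟩ := exists_isSkewInverse hdiv hs hs0
  obtain ⟨q, hq⟩ := exists_nsmul_eq hdiv six_regular (ψ x (V x (r * x) x))
  have hsq : star (s + q) = -(s + q) := by
    rw [star_add, hs, star_eq_neg_of_psi_eq_nsmul hq.symm, neg_add]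
  obtain ⟨t, ht⟩ := exists_isSkewInverse hdiv hsq (add_ne_zero_of_isSkewInverse hdiv hx hsr hq.symm)
  exact ⟨y, r, q, t, hxy, hsr, hq.symm, ht⟩

theorem isOneInvertible (hdiv : IsConjDivision (star : A → A)) {x s : A}
    (hs : star s = -s) (hxs : ¬(x = 0 ∧ s = 0)) : IsOneInvertible x s := by
  by_cases hx : x = 0
  · subst hx
    exact isOneInvertible_zero_left hdiv hs fun hs0 => hxs ⟨rfl, hs0⟩
  by_cases hs0 : s = 0
  · subst hs0
    exact isOneInvertible_zero_right hdiv hx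
  obtain ⟨y, r, q, t, h⟩ := exists_oneInverseData hdiv hx hs hs0
  exact h.isOneInvertible hdiv

end OneInverse

end StructurableRing

theorem stmt9_general {k : Type*} [Field k] {A : Type*} [NonAssocRing A] [Module k A]
    (h2 : (2 : k) ≠ 0) (h3 : (3 : k) ≠ 0)
    (bar : A → A) (hstr : IsStructurable k A bar) (hdiv : IsConjDivision bar) :
    ∀ x s : A, bar s = -s → ¬(x = 0 ∧ s = 0) →
      ∃ u t : A, bar t = -t ∧
        (∀ z : A, strTrip bar x u z = z + s * (t * z)) ∧
        s * u = -((3 : k)⁻¹ • strTrip bar x (t * x) x) ∧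
        strPsi bar x (s * (t * x)) = 0 := by
  obtain ⟨hbar_add, -, hbar_mul, hbar_bar, hcomm⟩ := hstr
  let _ : StarRing A :=
    { star := bar, star_involutive := hbar_bar, star_mul := hbar_mul, star_add := hbar_add }
  have _ : StructurableRing A :=
    { two_regular := isSMulRegular_nat_of_cast_ne_zero k (mod_cast h2)
      three_regular := isSMulRegular_nat_of_cast_ne_zero k (mod_cast h3)
      strTrip_commutator := hcomm }
  intro x s hs hxs
  obtain ⟨u, t, ht, htriple, hsu, hψ⟩ := StructurableRing.isOneInvertible hdiv hs hxs
  refine ⟨u, t, ht, htriple, ?_, hψ⟩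
  rw [← smul_neg, eq_inv_smul_iff₀ h3, ofNat_smul_eq_nsmul]
  exact hsu

/-- Let `A` be a structurable division algebra over a field `k` with
`char k ≠ 2, 3`.  Then every pair `(x,s) ∈ A × S` with `(x,s) ≠ (0,0)` is
one-invertible: there exist `u ∈ A` and `t ∈ S` such that
`V_{x,u} = id + L_s L_t`, `s·u = −(1/3)·U_x(t·x)` and `ψ(x, s·(t·x)) = 0`. -/
theorem stmt9 {k : Type*} [Field k] {A : Type*} [NonAssocRing A] [Module k A]
    [SMulCommClass k A A] [IsScalarTower k A A] [FiniteDimensional k A] [Nontrivial A]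
    (h2 : (2 : k) ≠ 0) (h3 : (3 : k) ≠ 0)
    (bar : A → A) (hstr : IsStructurable k A bar) (hdiv : IsConjDivision bar) :
    ∀ x s : A, bar s = -s → ¬(x = 0 ∧ s = 0) →
      ∃ u t : A, bar t = -t ∧
        (∀ z : A, strTrip bar x u z = z + s * (t * z)) ∧
        s * u = -((3 : k)⁻¹ • strTrip bar x (t * x) x) ∧
        strPsi bar x (s * (t * x)) = 0 :=
  stmt9_general h2 h3 bar hstr hdiv
end

section
/- Let A be a structurable division algebra over a field k with char(k) ≠ 2 and char(k) ≠ 3, let 0 ≠ x ∈ A with conjugate inverse x̂, and let s ∈ S. Then q_x(s)·x̂ = −(1/3)·U_x(s·x). -/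
/-!
Write `[a, b, c]` for the associator. The algebra `A` is *skew-alternative*:
`[s, a, b] = -[a, s, b] = [a, b, s]` for every skew `s`. Indeed the defining identity, specialised
at `1`, shows that `[s, a, b] + [a, s, b]` and `[a, s, b] + [a, b, s]` change sign when `a` or `b`
is conjugated, and the two linear relations it leaves between them force `6([a, s, b] + [a, b, s])`
to vanish. Skew-alternativity yields `s·V_{y,x}1 + V_{x,y}s = ψ(s·y, x)`.

If `x̂` is the conjugate inverse of `x`, then `V_{x,x̂} = V_{x̂,x} = id`, so `ψ(s·x, x̂) = 2s`,
which in turn gives `{s·x, x, x̂} = 3 s·x`. As `V_{x,x̂}` commutes with `V_{x,s·x}`, the defining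
identity becomes `V_{U_x(s·x), x̂} = 3 V_{x, s·x}`, and
`6 q_x(s)·x̂ = {x, x̂, U_x(s·x)} - {U_x(s·x), x̂, x} = U_x(s·x) - 3 U_x(s·x)`.
-/

/-- The failure `[s, a, b] + [a, s, b]` of left skew-alternativity; it vanishes for skew `s` in a
structurable algebra. -/
def leftAlternator {A : Type*} [NonAssocRing A] (s a b : A) : A :=
  associator s a b + associator a s b

/-- The failure `[a, s, b] + [a, b, s]` of right skew-alternativity; the argument `s` that is meant
to be skew comes first, as in `leftAlternator`. -/
def rightAlternator {A : Type*} [NonAssocRing A] (s a b : A) : A :=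
  associator a s b + associator a b s

/-- `v` is a conjugate inverse of `u`: the operator `V_{u,v}` is the identity. -/
def IsConjInverse {A : Type*} [NonAssocRing A] (bar : A → A) (u v : A) : Prop :=
  ∀ z : A, strTrip bar u v z = z

theorem strPsi_mul {A : Type*} [NonAssocRing A] (bar : A → A) (a b z : A) :
    strPsi bar a b * z = strTrip bar a z b - strTrip bar b z a := by
  simp only [strPsi, strTrip, sub_mul]
  abel

namespace IsStructurable

variable {k : Type*} [Field k] {A : Type*} [NonAssocRing A] [Module k A] {bar : A → A} {s : A}

theorem bar_add (h : IsStructurable k A bar) (x y : A) : bar (x + y) = bar x + bar y :=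
  h.1 x y

theorem bar_smul (h : IsStructurable k A bar) (c : k) (x : A) : bar (c • x) = c • bar x :=
  h.2.1 c x

theorem bar_mul (h : IsStructurable k A bar) (x y : A) : bar (x * y) = bar y * bar x :=
  h.2.2.1 x y

theorem bar_bar (h : IsStructurable k A bar) (x : A) : bar (bar x) = x :=
  h.2.2.2.1 x

theorem commutator_identity (h : IsStructurable k A bar) (x y z w a : A) :
    strTrip bar x y (strTrip bar z w a) - strTrip bar z w (strTrip bar x y a)
      = strTrip bar (strTrip bar x y z) w a - strTrip bar z (strTrip bar y x w) a :=
  h.2.2.2.2 x y z w a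

theorem bar_neg (h : IsStructurable k A bar) (x : A) : bar (-x) = -bar x :=
  map_neg (AddMonoidHom.mk' bar h.bar_add) x

theorem bar_sub (h : IsStructurable k A bar) (x y : A) : bar (x - y) = bar x - bar y :=
  map_sub (AddMonoidHom.mk' bar h.bar_add) x y

theorem bar_one (h : IsStructurable k A bar) : bar 1 = 1 := by
  simpa only [mul_one, h.bar_bar] using (h.bar_mul (bar 1) 1).symm

theorem strTrip_smul_middle [SMulCommClass k A A] [IsScalarTower k A A]
    (h : IsStructurable k A bar) (c : k) (x y z : A) :
    strTrip bar x (c • y) z = c • strTrip bar x y z := by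
  simp only [strTrip, h.bar_smul, mul_smul_comm, smul_mul_assoc, smul_add, smul_sub]

theorem commutator_antisymm (h : IsStructurable k A bar) (x y z w a : A) :
    strTrip bar (strTrip bar x y z) w a - strTrip bar z (strTrip bar y x w) a
      = strTrip bar x (strTrip bar w z y) a - strTrip bar (strTrip bar z w x) y a := by
  rw [← h.commutator_identity x y z w, ← neg_sub, h.commutator_identity z w x y, neg_sub]

theorem bar_rightAlternator (h : IsStructurable k A bar) (hs : bar s = -s) (a b : A) :
    bar (rightAlternator s a b) = leftAlternator s (bar b) (bar a) := by
  simp only [rightAlternator, leftAlternator, associator_apply, h.bar_add, h.bar_sub, h.bar_mul, hs,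
    mul_neg, neg_mul]
  abel

theorem leftAlternator_eq_bar (h : IsStructurable k A bar) (hs : bar s = -s) (a b : A) :
    leftAlternator s a b = bar (rightAlternator s (bar b) (bar a)) := by
  rw [h.bar_rightAlternator hs, h.bar_bar, h.bar_bar]

theorem rightAlternator_bar_right (h : IsStructurable k A bar) (h2 : (2 : k) ≠ 0)
    (hs : bar s = -s) (a b : A) :
    rightAlternator s a (bar b) = -rightAlternator s a b := by
  have double : (2 : k) • (rightAlternator s a (bar b) + rightAlternator s a b) = 0 := by
    have hanti := h.commutator_antisymm s 1 b 1 a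
    simp only [strTrip, rightAlternator, associator_apply, h.bar_add, h.bar_sub, h.bar_neg,
      h.bar_one, h.bar_mul, h.bar_bar, hs, mul_add, add_mul, mul_sub, sub_mul, mul_neg, neg_mul,
      mul_one, one_mul] at hanti ⊢
    linear_combination (norm := module) (-1 : k) • hanti
  exact eq_neg_of_add_eq_zero_left ((smul_eq_zero.mp double).resolve_left h2)

theorem leftAlternator_bar_left (h : IsStructurable k A bar) (h2 : (2 : k) ≠ 0)
    (hs : bar s = -s) (a b : A) :
    leftAlternator s (bar a) b = -leftAlternator s a b := by
  rw [h.leftAlternator_eq_bar hs, h.rightAlternator_bar_right h2 hs, h.bar_neg,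
    ← h.leftAlternator_eq_bar hs]

theorem leftAlternator_add_swap_sub_bar (h : IsStructurable k A bar) (hs : bar s = -s) (a b : A) :
    leftAlternator s a b + leftAlternator s b a - leftAlternator s b (bar a)
      = (2 : k) • rightAlternator s a b + (2 : k) • rightAlternator s b a
        + rightAlternator s b (bar a) := by
  have hcomm := h.commutator_identity s 1 a 1 b
  simp only [strTrip, leftAlternator, rightAlternator, associator_apply, h.bar_add, h.bar_sub,
    h.bar_neg, h.bar_one, h.bar_mul, hs, mul_add, add_mul, mul_sub, sub_mul, mul_neg,
    neg_mul, mul_one, one_mul] at hcomm ⊢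
  linear_combination (norm := module) (-1 : k) • hcomm

theorem leftAlternator_add_rightAlternator_add_bar (h : IsStructurable k A bar)
    (hs : bar s = -s) (a b : A) :
    leftAlternator s a b + rightAlternator s a b + rightAlternator s (bar a) (bar b)
      = rightAlternator s b a := by
  have hanti := h.commutator_antisymm s 1 a (bar b) 1
  simp only [strTrip, leftAlternator, rightAlternator, associator_apply, h.bar_add, h.bar_sub,
    h.bar_neg, h.bar_one, h.bar_mul, h.bar_bar, hs, mul_add, add_mul, mul_sub, sub_mul, mul_neg,
    neg_mul, mul_one, one_mul] at hanti ⊢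
  linear_combination (norm := module) (1 : k) • hanti

theorem rightAlternator_bar_left (h : IsStructurable k A bar) (h2 : (2 : k) ≠ 0)
    (hs : bar s = -s) (a b : A) :
    rightAlternator s (bar a) b = -rightAlternator s a b := by
  have double : (2 : k) • (rightAlternator s (bar a) b + rightAlternator s a b) = 0 := by
    have hrel := h.leftAlternator_add_swap_sub_bar hs a b
    have hrel_bar := h.leftAlternator_add_swap_sub_bar hs (bar a) b
    rw [h.bar_bar, h.leftAlternator_bar_left h2 hs, h.rightAlternator_bar_right h2 hs] at hrel_bar
    rw [h.rightAlternator_bar_right h2 hs] at hrel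
    linear_combination (norm := module) (-1 : k) • hrel + (-1 : k) • hrel_bar
  exact eq_neg_of_add_eq_zero_left ((smul_eq_zero.mp double).resolve_left h2)

theorem leftAlternator_bar_right (h : IsStructurable k A bar) (h2 : (2 : k) ≠ 0)
    (hs : bar s = -s) (a b : A) :
    leftAlternator s a (bar b) = -leftAlternator s a b := by
  rw [h.leftAlternator_eq_bar hs, h.rightAlternator_bar_left h2 hs, h.bar_neg,
    ← h.leftAlternator_eq_bar hs]

theorem rightAlternator_eq_zero (h : IsStructurable k A bar) (h2 : (2 : k) ≠ 0)
    (h3 : (3 : k) ≠ 0) (hs : bar s = -s) (a b : A) : rightAlternator s a b = 0 := by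
  have left_eq (a b : A) :
      leftAlternator s a b = rightAlternator s b a - (2 : k) • rightAlternator s a b := by
    have hrel := h.leftAlternator_add_rightAlternator_add_bar hs a b
    rw [h.rightAlternator_bar_left h2 hs, h.rightAlternator_bar_right h2 hs] at hrel
    linear_combination (norm := module) (1 : k) • hrel
  have right_swap (a b : A) :
      (2 : k) • (rightAlternator s a b + (2 : k) • rightAlternator s b a) = 0 := by
    have hrel := h.leftAlternator_add_swap_sub_bar hs a b
    rw [h.leftAlternator_bar_right h2 hs, h.rightAlternator_bar_right h2 hs, left_eq,
      left_eq] at hrel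
    linear_combination (norm := module) (-1 : k) • hrel
  have sextuple : ((2 : k) * 3) • rightAlternator s a b = 0 := by
    linear_combination (norm := module) (2 : k) • right_swap b a - right_swap a b
  exact (smul_eq_zero.mp sextuple).resolve_left (mul_ne_zero h2 h3)

theorem leftAlternator_eq_zero (h : IsStructurable k A bar) (h2 : (2 : k) ≠ 0)
    (h3 : (3 : k) ≠ 0) (hs : bar s = -s) (a b : A) : leftAlternator s a b = 0 := by
  rw [h.leftAlternator_eq_bar hs, h.rightAlternator_eq_zero h2 h3 hs]
  exact map_zero (AddMonoidHom.mk' bar h.bar_add)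

theorem associator_rotate (h : IsStructurable k A bar) (h2 : (2 : k) ≠ 0) (h3 : (3 : k) ≠ 0)
    (hs : bar s = -s) (a b : A) : associator a b s = associator s a b := by
  have left := h.leftAlternator_eq_zero h2 h3 hs a b
  have right := h.rightAlternator_eq_zero h2 h3 hs a b
  rw [leftAlternator, add_eq_zero_iff_eq_neg] at left
  rw [rightAlternator, add_eq_zero_iff_neg_eq] at right
  rw [left, right]

theorem associator_add_swap_bar (h : IsStructurable k A bar) (h2 : (2 : k) ≠ 0)
    (h3 : (3 : k) ≠ 0) (a b c : A) :
    associator a b (bar c) + associator a (bar c) b = associator a b c + associator a c b := by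
  have skew : bar (c - bar c) = -(c - bar c) := by rw [h.bar_sub, h.bar_bar, neg_sub]
  have hright := h.rightAlternator_eq_zero h2 h3 skew a b
  simp only [rightAlternator, associator_apply, mul_sub, sub_mul] at hright ⊢
  linear_combination (norm := module) (-1 : k) • hright

/-- The operator identity `L_s V_{y,x} + V_{x,y} L_s = L_{ψ(s·y,x)}`, evaluated at `1`. -/
theorem mul_strTrip_one_add_strTrip (h : IsStructurable k A bar) (h2 : (2 : k) ≠ 0)
    (h3 : (3 : k) ≠ 0) (hs : bar s = -s) (x y : A) :
    s * strTrip bar y x 1 + strTrip bar x y s = strPsi bar (s * y) x := by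
  have associators : s * strTrip bar y x 1 + strTrip bar x y s - strPsi bar (s * y) x
      = associator x (bar y) s + associator s (bar y) x
        - (associator s y (bar x) + associator s (bar x) y) := by
    simp only [strTrip, strPsi, associator_apply, h.bar_mul, hs, mul_add, mul_sub, mul_neg, mul_one,
      one_mul]
    abel
  rw [← sub_eq_zero, associators, h.associator_rotate h2 h3 hs, h.associator_add_swap_bar h2 h3,
    h.associator_add_swap_bar h2 h3]
  abel

theorem strTrip_one_one_injective (h : IsStructurable k A bar) (h3 : (3 : k) ≠ 0) :
    Function.Injective fun v : A => strTrip bar 1 v 1 := by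
  have triple (v : A) : strTrip bar 1 v 1 + (2 : k) • bar (strTrip bar 1 v 1) = (3 : k) • v := by
    simp only [strTrip, h.bar_one, h.bar_add, h.bar_sub, h.bar_bar, mul_one, one_mul]
    module
  intro v w (hvw : strTrip bar 1 v 1 = strTrip bar 1 w 1)
  have triple_eq : (3 : k) • v = (3 : k) • w := by rw [← triple, ← triple, hvw]
  exact smul_right_injective A h3 triple_eq

end IsStructurable

namespace IsConjInverse

variable {k : Type*} [Field k] {A : Type*} [NonAssocRing A] [Module k A] {bar : A → A}
  {x xhat s : A}

theorem symm (hx : IsConjInverse bar x xhat) (h : IsStructurable k A bar) (h3 : (3 : k) ≠ 0) :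
    IsConjInverse bar xhat x := by
  intro w
  apply h.strTrip_one_one_injective h3
  have hcomm := h.commutator_identity x xhat 1 w 1
  rw [hx, hx, sub_self] at hcomm
  exact (sub_eq_zero.mp hcomm.symm).symm

theorem strPsi_skew_mul (hx : IsConjInverse bar x xhat) (h : IsStructurable k A bar)
    (h2 : (2 : k) ≠ 0) (h3 : (3 : k) ≠ 0) (hs : bar s = -s) :
    strPsi bar (s * x) xhat = (2 : k) • s := by
  rw [← h.mul_strTrip_one_add_strTrip h2 h3 hs, hx, hx.symm h h3, mul_one, two_smul]

theorem strTrip_skew_mul [IsScalarTower k A A] (hx : IsConjInverse bar x xhat)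
    (h : IsStructurable k A bar) (h2 : (2 : k) ≠ 0) (h3 : (3 : k) ≠ 0) (hs : bar s = -s) :
    strTrip bar (s * x) x xhat = (3 : k) • (s * x) := by
  calc strTrip bar (s * x) x xhat
      = strPsi bar (s * x) xhat * x + strTrip bar xhat x (s * x) := by
        rw [strPsi_mul, sub_add_cancel]
    _ = (2 : k) • (s * x) + s * x := by
        rw [hx.strPsi_skew_mul h h2 h3 hs, hx.symm h h3, smul_mul_assoc]
    _ = (3 : k) • (s * x) := by module

theorem strTrip_strTrip_skew_mul [SMulCommClass k A A] [IsScalarTower k A A]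
    (hx : IsConjInverse bar x xhat) (h : IsStructurable k A bar) (h2 : (2 : k) ≠ 0)
    (h3 : (3 : k) ≠ 0) (hs : bar s = -s) (a : A) :
    strTrip bar (strTrip bar x (s * x) x) xhat a = (3 : k) • strTrip bar x (s * x) a := by
  have hcomm := h.commutator_identity x (s * x) x xhat a
  rw [hx, hx, sub_self, hx.strTrip_skew_mul h h2 h3 hs, h.strTrip_smul_middle] at hcomm
  exact sub_eq_zero.mp hcomm.symm

end IsConjInverse

theorem stmt10_general {k : Type*} [Field k] {A : Type*} [NonAssocRing A] [Module k A]
    [SMulCommClass k A A] [IsScalarTower k A A] (h2 : (2 : k) ≠ 0) (h3 : (3 : k) ≠ 0)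
    {bar : A → A} (hstr : IsStructurable k A bar) {x xhat s : A}
    (hx : IsConjInverse bar x xhat) (hs : bar s = -s) :
    strQ k bar x s * xhat = -((3 : k)⁻¹ • strTrip bar x (s * x) x) := by
  set u := strTrip bar x (s * x) x
  have six_inv_mul_two : (6 : k)⁻¹ * 2 = 3⁻¹ := by
    rw [show (6 : k) = 3 * 2 by norm_num, mul_inv, inv_mul_cancel_right₀ h2]
  calc strQ k bar x s * xhat
      = (6 : k)⁻¹ • (strTrip bar x xhat u - strTrip bar u xhat x) := by
        rw [strQ, smul_mul_assoc, strPsi_mul]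
    _ = (6 : k)⁻¹ • (u - (3 : k) • u) := by
        rw [hx, hx.strTrip_strTrip_skew_mul hstr h2 h3 hs]
    _ = -((3 : k)⁻¹ • u) := by
        rw [← six_inv_mul_two]
        module

/-- Let `A` be a structurable division algebra over a field `k` with
`char k ≠ 2, 3`, let `0 ≠ x ∈ A` with conjugate inverse `x̂`, and let `s ∈ S`.
Then `q_x(s)·x̂ = −(1/3)·U_x(s·x)`. -/
theorem stmt10 {k : Type*} [Field k] {A : Type*} [NonAssocRing A] [Module k A]
    [SMulCommClass k A A] [IsScalarTower k A A] [FiniteDimensional k A] [Nontrivial A]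
    (h2 : (2 : k) ≠ 0) (h3 : (3 : k) ≠ 0)
    (bar : A → A) (hstr : IsStructurable k A bar) (hdiv : IsConjDivision bar)
    (x : A) (hx0 : x ≠ 0) (xhat : A) (hxhat : ∀ z : A, strTrip bar x xhat z = z)
    (s : A) (hsS : bar s = -s) :
    strQ k bar x s * xhat = -((3 : k)⁻¹ • strTrip bar x (s * x) x) :=
  stmt10_general h2 h3 hstr hxhat hsS
end

section
/- Let D be a division ring whose center has characteristic ≠ 2, equipped with an involution σ, let V be a right D-module, and let h : V × V → D be an anisotropic skew-hermitian form. Let V̂ := D ⊕ V ⊕ D with the form ĥ((a,v,b),(c,w,d)) := σ(a)·d − σ(b)·c + h(v,w), and let w₀ := (1,0,0). Then: (1) for every pair (z,s) ∈ V × D with h(z,z) = s − σ(s), the map α_{z,s} : V̂ → V̂ defined by α_{z,s}(a,v,b) := (a + h(z,v) + s·b, v + z·b, b) is a right D-linear bijection satisfying ĥ(α_{z,s}(ξ), α_{z,s}(η)) = ĥ(ξ,η) for all ξ,η ∈ V̂; and (2) conversely, if φ : V̂ → V̂ is a right D-linear map with ĥ(φ(ξ),φ(η)) = ĥ(ξ,η)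 for all ξ,η ∈ V̂, such that φ(w₀) = w₀, φ(D ⊕ V ⊕ 0) ⊆ D ⊕ V ⊕ 0, φ(ξ) − ξ ∈ D ⊕ 0 ⊕ 0 for all ξ ∈ D ⊕ V ⊕ 0, and φ(ξ) − ξ ∈ D ⊕ V ⊕ 0 for all ξ ∈ V̂, then φ = α_{z,s} for some (z,s) ∈ V × D with h(z,z) = s − σ(s). -/
open MulOpposite

/-- The componentwise right `D`-action on `V̂ = D ⊕ V ⊕ D`:
`(a, v, b)·d := (a·d, v·d, b·d)`. -/
def ract {D V : Type*} [Ring D] [AddCommGroup V] [Module Dᵐᵒᵖ V]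
    (ξ : D × V × D) (d : D) : D × V × D :=
  (ξ.1 * d, (op d) • ξ.2.1, ξ.2.2 * d)

/-- The skew-hermitian form `ĥ((a,v,b),(c,w,d)) := σ(a)·d − σ(b)·c + h(v,w)` on
`V̂ = D ⊕ V ⊕ D`. -/
def hhat {D V : Type*} [Ring D] [AddCommGroup V]
    (σ : D → D) (h : V → V → D) (ξ η : D × V × D) : D :=
  σ ξ.1 * η.2.2 - σ ξ.2.2 * η.1 + h ξ.2.1 η.2.1

/-- The root-group element `α_{z,s}(a,v,b) := (a + h(z,v) + s·b, v + z·b, b)`. -/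
def alphaMap {D V : Type*} [Ring D] [AddCommGroup V] [Module Dᵐᵒᵖ V]
    (h : V → V → D) (z : V) (s : D) (ξ : D × V × D) : D × V × D :=
  (ξ.1 + h z ξ.2.1 + s * ξ.2.2, ξ.2.1 + (op ξ.2.2) • z, ξ.2.2)

/-!
Composing `α_{z,s}` with `α_{w,t}` gives `α_{z+w, s+t+h(z,w)}`, so every `α_{z,s}` is invertible.
Conversely, write `φ (0, 0, 1) = (s, z, 1)`. Linearity determines the `V`-component of `φ ξ` from
`z`, and pairing `φ ξ` with `φ (0, 0, 1)` then determines its first component, since `ĥ` is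
preserved. Taking `ξ = (0, 0, 1)` in this formula gives `h z z = s - σ s`, and this equation turns
the general formula into that of `α_{z,s}`.
-/

/-- A skew-hermitian form, with respect to the involution `star` of `D`, on a right `D`-module `V`
(a module over `Dᵐᵒᵖ`). Additivity and semilinearity are required in the second variable only;
`skew` transfers them to the first. -/
structure IsSkewHermitian {D V : Type*} [Ring D] [StarRing D] [AddCommGroup V] [Module Dᵐᵒᵖ V]
    (h : V → V → D) : Prop where
  add_right : ∀ v w w' : V, h v (w + w') = h v w + h v w'
  smul_right : ∀ (b : D) (v w : V), h v (op b • w) = h v w * b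
  skew : ∀ v w : V, star (h v w) = -h w v

section

variable {D V : Type*} [Ring D] [AddCommGroup V] [Module Dᵐᵒᵖ V]

theorem snd_fst_apply_eq_add_smul {φ : D × V × D → D × V × D}
    (map_add : ∀ ξ η, φ (ξ + η) = φ ξ + φ η) (map_ract : ∀ ξ d, φ (ract ξ d) = ract (φ ξ) d)
    (snd_fst_eq : ∀ (a : D) (v : V), (φ (a, v, 0)).2.1 = v) (ξ : D × V × D) :
    (φ ξ).2.1 = ξ.2.1 + op ξ.2.2 • (φ (0, 0, 1)).2.1 := by
  have decomp : ξ = (ξ.1, ξ.2.1, 0) + ract (0, 0, 1) ξ.2.2 := by simp [ract]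
  calc (φ ξ).2.1 = (φ (ξ.1, ξ.2.1, 0) + ract (φ (0, 0, 1)) ξ.2.2).2.1 := by
        rw [← map_ract, ← map_add, ← decomp]
    _ = ξ.2.1 + op ξ.2.2 • (φ (0, 0, 1)).2.1 := congrArg (· + _) (snd_fst_eq ξ.1 ξ.2.1)

variable [StarRing D] {h : V → V → D}

namespace IsSkewHermitian

theorem eq_neg_star (hh : IsSkewHermitian h) (v w : V) : h v w = -star (h w v) := by
  rw [hh.skew, neg_neg]

theorem add_left (hh : IsSkewHermitian h) (v v' w : V) : h (v + v') w = h v w + h v' w := by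
  rw [hh.eq_neg_star, hh.add_right, star_add, neg_add, ← hh.eq_neg_star, ← hh.eq_neg_star]

theorem smul_left (hh : IsSkewHermitian h) (a : D) (v w : V) :
    h (op a • v) w = star a * h v w := by
  rw [hh.eq_neg_star, hh.smul_right, star_mul, ← mul_neg, ← hh.eq_neg_star]

theorem zero_left (hh : IsSkewHermitian h) (w : V) : h 0 w = 0 := by
  simpa using hh.add_left 0 0 w

theorem zero_right (hh : IsSkewHermitian h) (v : V) : h v 0 = 0 := by
  simpa using hh.add_right v 0 0

theorem neg_right (hh : IsSkewHermitian h) (v w : V) : h v (-w) = -h v w :=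
  eq_neg_of_add_eq_zero_left <| by rw [← hh.add_right, neg_add_cancel, hh.zero_right]

theorem alphaMap_add (hh : IsSkewHermitian h) (z : V) (s : D) (ξ η : D × V × D) :
    alphaMap h z s (ξ + η) = alphaMap h z s ξ + alphaMap h z s η := by
  ext
  · simp only [alphaMap, Prod.fst_add, Prod.snd_add, hh.add_right, mul_add]
    abel
  · simp only [alphaMap, Prod.fst_add, Prod.snd_add, op_add, add_smul]
    abel
  · rfl

theorem alphaMap_ract (hh : IsSkewHermitian h) (z : V) (s : D) (ξ : D × V × D) (d : D) :
    alphaMap h z s (ract ξ d) = ract (alphaMap h z s ξ) d := by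
  simp only [alphaMap, ract, hh.smul_right, add_mul, mul_assoc, op_mul, mul_smul, smul_add]

theorem alphaMap_zero_zero (hh : IsSkewHermitian h) : alphaMap h 0 0 = id := by
  funext ξ
  simp [alphaMap, hh.zero_left]

theorem alphaMap_comp_alphaMap (hh : IsSkewHermitian h) (z w : V) (s t : D) :
    alphaMap h z s ∘ alphaMap h w t = alphaMap h (z + w) (s + t + h z w) := by
  funext ξ
  ext
  · simp only [alphaMap, Function.comp_apply, hh.add_left, hh.add_right, hh.smul_right, add_mul]
    abel
  · simp only [alphaMap, Function.comp_apply, smul_add]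
    abel
  · rfl

theorem alphaMap_bijective (hh : IsSkewHermitian h) (z : V) (s : D) :
    Function.Bijective (alphaMap h z s) := by
  have right_inv : alphaMap h z s ∘ alphaMap h (-z) (h z z - s) = id := by
    rw [hh.alphaMap_comp_alphaMap, hh.neg_right, add_neg_cancel, add_sub_cancel, add_neg_cancel,
      hh.alphaMap_zero_zero]
  have left_inv : alphaMap h (-z) (h z z - s) ∘ alphaMap h z s = id := by
    rw [hh.alphaMap_comp_alphaMap, neg_add_cancel, sub_add_cancel, ← hh.add_left, add_neg_cancel,
      hh.zero_left, hh.alphaMap_zero_zero]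
  exact Function.bijective_iff_has_inverse.mpr ⟨_, congrFun left_inv, congrFun right_inv⟩

theorem hhat_alphaMap_alphaMap (hh : IsSkewHermitian h) {z : V} {s : D}
    (hz : h z z = s - star s) (ξ η : D × V × D) :
    hhat star h (alphaMap h z s ξ) (alphaMap h z s η) = hhat star h ξ η := by
  simp only [alphaMap, hhat, star_add, star_mul, hh.skew, hh.add_left, hh.add_right,
    hh.smul_left, hh.smul_right, hz]
  noncomm_ring

theorem fst_apply_eq_of_hhat_eq (hh : IsSkewHermitian h) {φ : D × V × D → D × V × D}
    (hhat_map : ∀ ξ η, hhat star h (φ ξ) (φ η) = hhat star h ξ η)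
    (snd_snd_eq : ∀ ξ, (φ ξ).2.2 = ξ.2.2) (ξ : D × V × D) :
    (φ ξ).1 = ξ.1 + h (φ (0, 0, 1)).2.1 (φ ξ).2.1 + star (φ (0, 0, 1)).1 * ξ.2.2 := by
  have pairing : star (φ (0, 0, 1)).1 * ξ.2.2 - (φ ξ).1 + h (φ (0, 0, 1)).2.1 (φ ξ).2.1 = -ξ.1 := by
    simpa [hhat, snd_snd_eq, hh.zero_left] using hhat_map (0, 0, 1) ξ
  linear_combination (norm := abel) -pairing

theorem exists_eq_alphaMap (hh : IsSkewHermitian h) {φ : D × V × D → D × V × D}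
    (map_add : ∀ ξ η, φ (ξ + η) = φ ξ + φ η) (map_ract : ∀ ξ d, φ (ract ξ d) = ract (φ ξ) d)
    (hhat_map : ∀ ξ η, hhat star h (φ ξ) (φ η) = hhat star h ξ η)
    (snd_fst_eq : ∀ (a : D) (v : V), (φ (a, v, 0)).2.1 = v) (snd_snd_eq : ∀ ξ, (φ ξ).2.2 = ξ.2.2) :
    ∃ (z : V) (s : D), h z z = s - star s ∧ φ = alphaMap h z s := by
  have fst_formula := hh.fst_apply_eq_of_hhat_eq hhat_map snd_snd_eq
  have middle_formula := snd_fst_apply_eq_add_smul map_add map_ract snd_fst_eq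
  obtain ⟨s, hs⟩ : ∃ s, (φ (0, 0, 1)).1 = s := ⟨_, rfl⟩
  obtain ⟨z, hz⟩ : ∃ z, (φ (0, 0, 1)).2.1 = z := ⟨_, rfl⟩
  simp only [hs, hz] at fst_formula middle_formula
  have hzz : h z z = s - star s := by
    rw [eq_sub_iff_add_eq]
    simpa [hs, hz] using (fst_formula (0, 0, 1)).symm
  refine ⟨z, s, hzz, funext fun ξ => Prod.ext ?_ (Prod.ext (middle_formula ξ) (snd_snd_eq ξ))⟩
  calc (φ ξ).1 = ξ.1 + h z (ξ.2.1 + op ξ.2.2 • z) + star s * ξ.2.2 := by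
        rw [fst_formula, middle_formula]
    _ = ξ.1 + h z ξ.2.1 + (h z z + star s) * ξ.2.2 := by
      rw [hh.add_right, hh.smul_right, add_mul, ← add_assoc, ← add_assoc]
    _ = ξ.1 + h z ξ.2.1 + s * ξ.2.2 := by rw [hzz, sub_add_cancel]

end IsSkewHermitian

theorem stmt15_general (hh : IsSkewHermitian h) :
    (∀ (z : V) (s : D), h z z = s - star s →
      Function.Bijective (alphaMap h z s) ∧
      (∀ ξ η : D × V × D, alphaMap h z s (ξ + η) = alphaMap h z s ξ + alphaMap h z s η) ∧
      (∀ (ξ : D × V × D) (d : D), alphaMap h z s (ract ξ d) = ract (alphaMap h z s ξ) d) ∧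
      (∀ ξ η : D × V × D,
        hhat star h (alphaMap h z s ξ) (alphaMap h z s η) = hhat star h ξ η))
    ∧
    (∀ φ : D × V × D → D × V × D,
      (∀ ξ η : D × V × D, φ (ξ + η) = φ ξ + φ η) →
      (∀ (ξ : D × V × D) (d : D), φ (ract ξ d) = ract (φ ξ) d) →
      (∀ ξ η : D × V × D, hhat star h (φ ξ) (φ η) = hhat star h ξ η) →
      (∀ (a : D) (v : V), (φ (a, v, 0)).2.1 = v) →
      (∀ ξ : D × V × D, (φ ξ).2.2 = ξ.2.2) →
      ∃ (z : V) (s : D), h z z = s - star s ∧ φ = alphaMap h z s) :=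
  ⟨fun z s hz => ⟨hh.alphaMap_bijective z s, hh.alphaMap_add z s, hh.alphaMap_ract z s,
    hh.hhat_alphaMap_alphaMap hz⟩,
    fun _ map_add map_ract hhat_map snd_fst_eq snd_snd_eq =>
      hh.exists_eq_alphaMap map_add map_ract hhat_map snd_fst_eq snd_snd_eq⟩

end

/-- Let `D` be a division ring whose center has characteristic `≠ 2`
(equivalently `(2 : D) ≠ 0`), with involution `σ`, let `V` be a right `D`-module (realized
as a module over `Dᵐᵒᵖ`), and let `h : V × V → D` be an anisotropic skew-hermitian form.
Let `V̂ := D ⊕ V ⊕ D` with the form `ĥ` and `w₀ := (1,0,0)`.  Then: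
(1) for every `(z,s) ∈ V × D` with `h(z,z) = s − σ(s)`, the map `α_{z,s}` is a right
`D`-linear bijection preserving `ĥ`; and (2) conversely, every right `D`-linear map
`φ : V̂ → V̂` preserving `ĥ` which fixes `w₀`, stabilizes `D ⊕ V ⊕ 0`, acts trivially on
`(D ⊕ V ⊕ 0)/(D ⊕ 0 ⊕ 0)` and on `V̂/(D ⊕ V ⊕ 0)`, equals `α_{z,s}` for some such
`(z,s)`. -/
theorem stmt15 {D V : Type*} [DivisionRing D] [AddCommGroup V] [Module Dᵐᵒᵖ V]
    (hchar : (2 : D) ≠ 0)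
    (σ : D → D)
    (hσadd : ∀ a b : D, σ (a + b) = σ a + σ b)
    (hσmul : ∀ a b : D, σ (a * b) = σ b * σ a)
    (hσinv : ∀ a : D, σ (σ a) = a)
    (h : V → V → D)
    (haddl : ∀ v v' w : V, h (v + v') w = h v w + h v' w)
    (haddr : ∀ v w w' : V, h v (w + w') = h v w + h v w')
    (hsesql : ∀ (a : D) (v w : V), h ((op a) • v) w = σ a * h v w)
    (hsesqr : ∀ (b : D) (v w : V), h v ((op b) • w) = h v w * b)
    (hskew : ∀ v w : V, σ (h v w) = -h w v)
    (haniso : ∀ v : V, h v v = 0 → v = 0) :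
    (∀ (z : V) (s : D), h z z = s - σ s →
      Function.Bijective (alphaMap h z s) ∧
      (∀ ξ η : D × V × D, alphaMap h z s (ξ + η) = alphaMap h z s ξ + alphaMap h z s η) ∧
      (∀ (ξ : D × V × D) (d : D), alphaMap h z s (ract ξ d) = ract (alphaMap h z s ξ) d) ∧
      (∀ ξ η : D × V × D, hhat σ h (alphaMap h z s ξ) (alphaMap h z s η) = hhat σ h ξ η))
    ∧
    (∀ φ : D × V × D → D × V × D,
      (∀ ξ η : D × V × D, φ (ξ + η) = φ ξ + φ η) →
      (∀ (ξ : D × V × D) (d : D), φ (ract ξ d) = ract (φ ξ) d) →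
      (∀ ξ η : D × V × D, hhat σ h (φ ξ) (φ η) = hhat σ h ξ η) →
      φ (1, 0, 0) = (1, 0, 0) →
      (∀ (a : D) (v : V), (φ (a, v, 0)).2.2 = 0) →
      (∀ (a : D) (v : V), (φ (a, v, 0)).2.1 = v) →
      (∀ ξ : D × V × D, (φ ξ).2.2 = ξ.2.2) →
      ∃ (z : V) (s : D), h z z = s - σ s ∧ φ = alphaMap h z s) := by
  let _ : StarRing D :=
    { star := σ, star_involutive := hσinv, star_mul := hσmul, star_add := hσadd }
  exact (stmt15_general ⟨haddr, hsesqr, hskew⟩).imp_right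
    fun converse φ map_add map_ract hhat_map _ _ => converse φ map_add map_ract hhat_map
end
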